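/- Let θ_∞ = νx.◇x (expressing the existence of an infinite path from the root). For all modal μ-calculus formulae φ, φ' and every ML-formula ψ: ψ is an ML-separator of φ, φ' over the class of finite trees if and only if ψ is an ML-separator of φ ∧ ¬θ_∞ and φ' ∧ ¬θ_∞ over the class of all models. The same equivalence holds with both classes relativized to T^d, for every d ∈ ℕ. -/

import Mathlib

/-- Formulae of the modal μ-calculus (in negation normal form). -/
inductive Form : Type
  | pos : ℕ → Form
  | neg : ℕ → Form
  | or  : Form → Form → Form
  | and : Form → Form → Form
  | dia : Form → Form
  | box : Form → Form
  | var : ℕ → Form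
  | mu  : ℕ → Form → Form
  | nu  : ℕ → Form → Form

namespace Form

/-- Fixpoint-free formulae: modal logic ML. -/
def IsML : Form → Prop
  | pos _ => True
  | neg _ => True
  | or φ ψ => IsML φ ∧ IsML ψ
  | and φ ψ => IsML φ ∧ IsML ψ
  | dia φ => IsML φ
  | box φ => IsML φ
  | var _ => False
  | mu _ _ => False
  | nu _ _ => False

/-- Modal depth: maximal nesting of ◇ and □. -/
def depth : Form → ℕ
  | pos _ => 0
  | neg _ => 0
  | or φ ψ => max φ.depth ψ.depth
  | and φ ψ => max φ.depth ψ.depth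
  | dia φ => φ.depth + 1
  | box φ => φ.depth + 1
  | var _ => 0
  | mu _ φ => φ.depth
  | nu _ φ => φ.depth

/-- The set of propositions occurring in a formula. -/
def sig : Form → Set ℕ
  | pos p => {p}
  | neg p => {p}
  | or φ ψ => φ.sig ∪ ψ.sig
  | and φ ψ => φ.sig ∪ ψ.sig
  | dia φ => φ.sig
  | box φ => φ.sig
  | var _ => ∅
  | mu _ φ => φ.sig
  | nu _ φ => φ.sig

/-- The size of a formula (its length as a string, up to a constant factor). -/
def size : Form → ℕ
  | pos _ => 1
  | neg _ => 2
  | or φ ψ => φ.size + ψ.size + 1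
  | and φ ψ => φ.size + ψ.size + 1
  | dia φ => φ.size + 1
  | box φ => φ.size + 1
  | var _ => 1
  | mu _ φ => φ.size + 2
  | nu _ φ => φ.size + 2

end Form

/-- A set has at least `g` elements. -/
def AtLeastCard {W : Type} (g : ℕ) (S : Set W) : Prop :=
  ∃ f : Fin g → W, Function.Injective f ∧ ∀ i, f i ∈ S

/-- Pointed Kripke structures. -/
structure Model : Type 1 where
  W : Type
  root : W
  R : W → W → Prop
  val : W → ℕ → Prop

namespace Model

/-- Semantics of the μ-calculus, via Knaster–Tarski style clauses. -/
def interp (M : Model) : Form → (ℕ → Set M.W) → Set M.W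
  | .pos p, _ => {w | M.val w p}
  | .neg p, _ => {w | ¬ M.val w p}
  | .or φ ψ, e => M.interp φ e ∪ M.interp ψ e
  | .and φ ψ, e => M.interp φ e ∩ M.interp ψ e
  | .dia φ, e => {w | ∃ v, M.R w v ∧ v ∈ M.interp φ e}
  | .box φ, e => {w | ∀ v, M.R w v → v ∈ M.interp φ e}
  | .var x, e => e x
  | .mu x φ, e => sInf {S : Set M.W | M.interp φ (Function.update e x S) ⊆ S}
  | .nu x φ, e => sSup {S : Set M.W | S ⊆ M.interp φ (Function.update e x S)}

/-- `M ⊨ φ`: the root of `M` satisfies `φ`. -/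
def Sat (M : Model) (φ : Form) : Prop := M.root ∈ M.interp φ fun _ => ∅

/-- Points reachable from the root in exactly `k` steps (in a tree: points of depth `k`). -/
def stepsTo (M : Model) : ℕ → M.W → Prop
  | 0, w => w = M.root
  | (k+1), w => ∃ v, M.stepsTo k v ∧ M.R v w

/-- Membership in the `n`-prefix: depth at most `n`. -/
def InPrefix (M : Model) (n : ℕ) (w : M.W) : Prop := ∃ k ≤ n, M.stepsTo k w

/-- Tree models: every point is reachable from the root, the root has no predecessor,
and every point has at most one predecessor. -/
def IsTree (M : Model) : Prop :=
  (∀ w, Relation.ReflTransGen M.R M.root w) ∧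
  (∀ w, ¬ M.R w M.root) ∧
  (∀ w v v', M.R v w → M.R v' w → v = v')

/-- Outdegree at most `d`. -/
def outdegLE (M : Model) (d : ℕ) : Prop :=
  ∀ w, ¬ AtLeastCard (d+1) {v | M.R w v}

end Model

/-- The class `T^d` of all tree models of outdegree at most `d`. -/
def TreeC (d : ℕ) : Set Model := {M | M.IsTree ∧ M.outdegLE d}

/-- `(σ,n)`-bisimulations: bisimulations between the `n`-prefixes of the `σ`-reducts,
relating only points of equal depth and linking the roots. -/
structure IsNBisim (M M' : Model) (σ : Set ℕ) (n : ℕ) (Z : M.W → M'.W → Prop) : Prop where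
  root : Z M.root M'.root
  depthEq : ∀ ⦃w w'⦄, Z w w' → ∃ k ≤ n, M.stepsTo k w ∧ M'.stepsTo k w'
  base : ∀ ⦃w w'⦄, Z w w' → ∀ p ∈ σ, (M.val w p ↔ M'.val w' p)
  forth : ∀ ⦃w w'⦄, Z w w' → ∀ k, k < n → M.stepsTo k w →
      ∀ v, M.R w v → ∃ v', M'.R w' v' ∧ Z v v'
  back : ∀ ⦃w w'⦄, Z w w' → ∀ k, k < n → M'.stepsTo k w' →
      ∀ v', M'.R w' v' → ∃ v, M.R w v ∧ Z v v'

/-- `(σ,n)`-isomorphisms: `(σ,n)`-bisimulations bijective on the `n`-prefixes. -/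
def IsNIso (M M' : Model) (σ : Set ℕ) (n : ℕ) (Z : M.W → M'.W → Prop) : Prop :=
  IsNBisim M M' σ n Z ∧
  (∀ w w₁' w₂', Z w w₁' → Z w w₂' → w₁' = w₂') ∧
  (∀ w₁ w₂ w', Z w₁ w' → Z w₂ w' → w₁ = w₂) ∧
  (∀ w, M.InPrefix n w → ∃ w', Z w w') ∧
  (∀ w', M'.InPrefix n w' → ∃ w, Z w w')

/-- `M ≈ⁿ_σ M'`. -/
def NBisimEq (M M' : Model) (σ : Set ℕ) (n : ℕ) : Prop := ∃ Z, IsNBisim M M' σ n Z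

/-- `M ≅ⁿ_σ M'`. -/
def NIsoEq (M M' : Model) (σ : Set ℕ) (n : ℕ) : Prop := ∃ Z, IsNIso M M' σ n Z

/-- `ψ` separates `φ` from `φ'` over the class `C`: `φ ⊨ ψ` and `ψ ⊨ ¬φ'` over `C`. -/
def Separates (C : Set Model) (ψ φ φ' : Form) : Prop :=
  (∀ M ∈ C, M.Sat φ → M.Sat ψ) ∧ (∀ M ∈ C, M.Sat ψ → ¬ M.Sat φ')

/-- `θ_∞ = νx.◇x`: there is an infinite path from the root. -/
def thetaInf : Form := .nu 0 (.dia (.var 0))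

/-- `¬θ_∞ = μx.□x` (in negation normal form). -/
def negThetaInf : Form := .mu 0 (.box (.var 0))

/-!
At a point `w` from which no infinite path starts, the truth value of every μ-calculus formula is
computed by a finite deterministic automaton that reads the tree of paths from `w` bottom-up and
sees only the *set* of states of the successors. Keeping one successor for every state in that set
turns any well-founded model into a finite tree in which given formulae keep their truth values.

Fixpoint formulae need care because `φ` in `μx.φ` may contain `x` unguarded. Once the states of the
successors of `w` are known, however, the truth of `φ` at `w` is a monotone Boolean function `g` of
the truth of `x` at `w`, so the least and the greatest fixpoint are `g ⊥` and `g ⊤`.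
-/

namespace Model

theorem interp_mono (M : Model) (φ : Form) : Monotone (M.interp φ) := by
  have update_mono {e e' : ℕ → Set M.W} (h : e ≤ e') (x : ℕ) (S : Set M.W) :
      Function.update e x S ≤ Function.update e' x S :=
    update_le_update_iff.2 ⟨le_rfl, fun y _ => h y⟩
  induction φ with
  | pos p | neg p => exact fun _ _ _ => le_rfl
  | or φ ψ ihφ ihψ => exact fun _ _ h => Set.union_subset_union (ihφ h) (ihψ h)
  | and φ ψ ihφ ihψ => exact fun _ _ h => Set.inter_subset_inter (ihφ h) (ihψ h)
  | dia φ ih => exact fun _ _ h _ ⟨v, hwv, hv⟩ => ⟨v, hwv, ih h hv⟩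
  | box φ ih => exact fun _ _ h _ hw v hwv => ih h (hw v hwv)
  | var x => exact fun _ _ h => h x
  | mu x φ ih => exact fun _ _ h => sInf_le_sInf fun S hS => (ih (update_mono h x S)).trans hS
  | nu x φ ih =>
    exact fun _ _ h => sSup_le_sSup fun S hS => le_trans hS (ih (update_mono h x S))

/-- The monotone operator `S ↦ ⟦φ⟧` with `x` interpreted as `S`, whose extremal fixpoints
interpret `μx.φ` and `νx.φ`. -/
def interpHom (M : Model) (φ : Form) (x : ℕ) (e : ℕ → Set M.W) : Set M.W →o Set M.W where
  toFun S := M.interp φ (Function.update e x S)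
  monotone' := (M.interp_mono φ).comp Function.update_mono

theorem interp_update_interp_mu (M : Model) (φ : Form) (x : ℕ) (e : ℕ → Set M.W) :
    M.interp φ (Function.update e x (M.interp (.mu x φ) e)) = M.interp (.mu x φ) e :=
  (M.interpHom φ x e).map_lfp

theorem interp_update_interp_nu (M : Model) (φ : Form) (x : ℕ) (e : ℕ → Set M.W) :
    M.interp φ (Function.update e x (M.interp (.nu x φ) e)) = M.interp (.nu x φ) e :=
  (M.interpHom φ x e).map_gfp

/-! ### Well-founded points -/

/-- The point `w` is well-founded: no infinite path starts at `w`. -/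
def WFAt (M : Model) (w : M.W) : Prop := Acc (flip M.R) w

theorem WFAt.succ {M : Model} {w v : M.W} (hw : M.WFAt w) (hwv : M.R w v) : M.WFAt v :=
  Acc.inv hw hwv

@[elab_as_elim]
theorem WFAt.induction {M : Model} {p : M.W → Prop} {w : M.W} (hw : M.WFAt w)
    (ih : ∀ w, M.WFAt w → (∀ v, M.R w v → p v) → p w) : p w :=
  Acc.recOn hw fun w hw => ih w (Acc.intro w hw)

theorem sat_negThetaInf_iff (M : Model) : M.Sat negThetaInf ↔ M.WFAt M.root := by
  simp only [Sat, negThetaInf, interp, Function.update_self, Set.sInf_eq_sInter, Set.mem_sInter]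
  constructor
  · intro h
    exact h {w | M.WFAt w} fun w hw => Acc.intro w hw
  · intro h S hS
    exact h.induction fun w _ ih => hS ih

theorem sat_and_negThetaInf_iff (M : Model) (φ : Form) :
    M.Sat (.and φ negThetaInf) ↔ M.Sat φ ∧ M.WFAt M.root :=
  and_congr_right fun _ => M.sat_negThetaInf_iff

theorem IsTree.not_transGen_self {M : Model} (hM : M.IsTree) (w : M.W) :
    ¬ Relation.TransGen M.R w w := by
  obtain ⟨hreach, hroot, hpred⟩ := hM
  induction hreach w with
  | refl =>
    intro hcycle
    obtain ⟨u, _, hu⟩ := Relation.TransGen.tail'_iff.1 hcycle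
    exact hroot u hu
  | @tail v w _ hvw ih =>
    intro hcycle
    obtain ⟨u, hwu, huw⟩ := Relation.TransGen.tail'_iff.1 hcycle
    obtain rfl := hpred _ _ _ hvw huw
    exact ih (.head' hvw hwu)

theorem IsTree.wfAt_of_finite {M : Model} (hM : M.IsTree) [Finite M.W] (w : M.W) :
    M.WFAt w := by
  let r : M.W → M.W → Prop := flip (Relation.TransGen M.R)
  have : IsTrans M.W r := ⟨fun _ _ _ h h' => h'.trans h⟩
  have : Std.Irrefl r := ⟨hM.not_transGen_self⟩
  have hsub : Subrelation (flip M.R) r := fun h => Relation.TransGen.single h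
  exact hsub.accessible ((Finite.wellFounded_of_trans_of_irrefl r).apply w)

end Model

theorem atLeastCard_of_infinite {W : Type} {S : Set W} (hS : S.Infinite) (g : ℕ) :
    AtLeastCard g S :=
  ⟨fun i => hS.natEmbedding S i,
    Subtype.val_injective.comp ((hS.natEmbedding S).injective.comp Fin.val_injective),
    fun i => (hS.natEmbedding S i).2⟩

namespace Model

theorem outdegLE.finite_succ {M : Model} {d : ℕ} (hM : M.outdegLE d) (w : M.W) :
    {v | M.R w v}.Finite :=
  Set.not_infinite.1 fun h => hM w (atLeastCard_of_infinite h _)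

theorem WFAt.finite_reachable {M : Model} (hM : ∀ w, {v | M.R w v}.Finite) {w : M.W}
    (hw : M.WFAt w) : {v | Relation.ReflTransGen M.R w v}.Finite := by
  refine hw.induction fun w _ ih => ?_
  refine ((Set.finite_singleton w).union ((hM w).biUnion ih)).subset fun v hwv => ?_
  rcases hwv.cases_head with rfl | ⟨u, hwu, huv⟩
  · exact Or.inl rfl
  · exact Or.inr (Set.mem_biUnion hwu huv)

theorem IsTree.finite_iff_wfAt_root {M : Model} (hM : M.IsTree)
    (hsucc : ∀ w, {v | M.R w v}.Finite) : Finite M.W ↔ M.WFAt M.root := by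
  refine ⟨fun _ => hM.wfAt_of_finite M.root, fun h => ?_⟩
  exact Set.finite_univ_iff.1 ((h.finite_reachable hsucc).subset fun w _ => hM.1 w)

/-! ### Grafting -/

/-- The accessibility relation of `Model.graft`: the new root `none` sees the roots of all the
models `N i`, and every `N i` keeps its own relation. -/
inductive GraftR {ι : Type} (N : ι → Model) :
    Option (Σ i, (N i).W) → Option (Σ i, (N i).W) → Prop
  | root (i : ι) : GraftR N none (some ⟨i, (N i).root⟩)
  | step (i : ι) {u v : (N i).W} (huv : (N i).R u v) : GraftR N (some ⟨i, u⟩) (some ⟨i, v⟩)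

/-- The disjoint union of the models `N i` below a new root with valuation `V`. -/
def graft {ι : Type} (N : ι → Model) (V : ℕ → Prop) : Model where
  W := Option (Σ i, (N i).W)
  root := none
  R := GraftR N
  val w := w.elim V fun p => (N p.1).val p.2

section Graft

variable {ι : Type} {N : ι → Model}

theorem graftR_some_iff {a : Option (Σ i, (N i).W)} {i : ι} {v : (N i).W} :
    GraftR N a (some ⟨i, v⟩) ↔
      (a = none ∧ v = (N i).root) ∨ ∃ u, (N i).R u v ∧ a = some ⟨i, u⟩ := by
  constructor
  · rintro (_ | ⟨_, huv⟩)
    · exact Or.inl ⟨rfl, rfl⟩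
    · exact Or.inr ⟨_, huv, rfl⟩
  · rintro (⟨rfl, rfl⟩ | ⟨u, huv, rfl⟩)
    · exact GraftR.root i
    · exact GraftR.step i huv

theorem setOf_graftR_none :
    {a | GraftR N none a} = Set.range fun i => some ⟨i, (N i).root⟩ := by
  ext a
  constructor
  · rintro ⟨i⟩
    exact ⟨i, rfl⟩
  · rintro ⟨i, rfl⟩
    exact GraftR.root i

theorem setOf_graftR_some (i : ι) (u : (N i).W) :
    {a | GraftR N (some ⟨i, u⟩) a} = (fun v => some ⟨i, v⟩) '' {v | (N i).R u v} := by
  ext a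
  constructor
  · rintro (_ | ⟨_, huv⟩)
    exact ⟨_, huv, rfl⟩
  · rintro ⟨v, huv, rfl⟩
    exact GraftR.step i huv

theorem isTree_graft (hN : ∀ i, (N i).IsTree) (V : ℕ → Prop) : (graft N V).IsTree := by
  refine ⟨?_, fun _ hw => (nomatch hw), ?_⟩
  · rintro (_ | ⟨i, u⟩)
    · exact .refl
    · exact .head (GraftR.root i) (((hN i).1 u).lift _ fun _ _ => GraftR.step i)
  · rintro (_ | ⟨i, w⟩) a a' ha ha'
    · cases ha
    · rcases graftR_some_iff.1 ha with ⟨rfl, rfl⟩ | ⟨u, hu, rfl⟩ <;>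
        rcases graftR_some_iff.1 ha' with ⟨rfl, hw⟩ | ⟨u', hu', rfl⟩
      · rfl
      · exact ((hN i).2.1 _ hu').elim
      · exact ((hN i).2.1 u (hw ▸ hu)).elim
      · rw [(hN i).2.2 _ _ _ hu hu']

theorem WFAt.of_graft {V : ℕ → Prop} {i : ι} {u : (N i).W}
    (h : (graft N V).WFAt (some ⟨i, u⟩)) : (N i).WFAt u :=
  Subrelation.accessible (GraftR.step i)
    (InvImage.accessible (fun v => (some ⟨i, v⟩ : (graft N V).W)) h)

end Graft

end Model

/-! ### Bottom-up automata -/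

/-- Finite deterministic bottom-up automata on models. The state at a point is computed from the
propositions true there, the variables true there, and the set of states of the successors;
multiplicities of successor states are invisible. -/
structure TreeAutomaton where
  State : Type
  [finite : Finite State]
  step : (ℕ → Prop) → (ℕ → Prop) → Set State → State

attribute [instance] TreeAutomaton.finite

namespace TreeAutomaton

/-- `r` labels the well-founded points of `M` with the states of `A`, the variables being
interpreted by `e`. Labels of other points are arbitrary, as the run need not be determined
there. -/
def IsRun (A : TreeAutomaton) (M : Model) (e : ℕ → Set M.W) (r : M.W → A.State) : Prop :=
  ∀ w, M.WFAt w → r w = A.step (M.val w) (fun x => w ∈ e x) (r '' {v | M.R w v})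

/-- `A` with accepting states `F` recognizes `φ`: a well-founded point satisfies `φ` iff its state
lies in `F`. -/
def Recognizes (A : TreeAutomaton) (F : Set A.State) (φ : Form) : Prop :=
  ∀ (M : Model) (e : ℕ → Set M.W) (r : M.W → A.State), A.IsRun M e r →
    ∀ w, M.WFAt w → (w ∈ M.interp φ e ↔ r w ∈ F)

theorem exists_isRun (A : TreeAutomaton) (M : Model) (e : ℕ → Set M.W) : ∃ r, A.IsRun M e r := by
  let succOfWF : M.W → M.W → Prop := fun v w => M.WFAt w ∧ M.R w v
  have hwf : WellFounded succOfWF :=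
    ⟨fun w => Acc.intro w fun v hv => Subrelation.accessible And.right (hv.1.succ hv.2)⟩
  refine ⟨hwf.fix fun w rec => A.step (M.val w) (fun x => w ∈ e x)
    {q | ∃ v, ∃ hv : succOfWF v w, rec v hv = q}, fun w hw => ?_⟩
  rw [hwf.fix_eq]
  congr 1
  ext q
  constructor
  · rintro ⟨v, hv, rfl⟩
    exact ⟨v, hv.2, rfl⟩
  · rintro ⟨v, hwv, rfl⟩
    exact ⟨v, ⟨hw, hwv⟩, rfl⟩

theorem IsRun.map {A B : TreeAutomaton} {f : A.State → B.State}
    (hf : ∀ V E P, f (A.step V E P) = B.step V E (f '' P)) {M : Model} {e : ℕ → Set M.W}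
    {r : M.W → A.State} (hr : A.IsRun M e r) : B.IsRun M e (f ∘ r) := fun w hw => by
  rw [Function.comp_apply, hr w hw, hf, Set.image_comp]

theorem Recognizes.comap {A B : TreeAutomaton} {f : A.State → B.State} {F : Set B.State}
    {φ : Form} (hB : B.Recognizes F φ) (hf : ∀ V E P, f (A.step V E P) = B.step V E (f '' P)) :
    A.Recognizes (f ⁻¹' F) φ :=
  fun M e _ hr w hw => hB M e _ (hr.map hf) w hw

/-- The automaton whose state is the truth value of a condition on the propositions and variables
true at the point. -/
def ofLocal (b : (ℕ → Prop) → (ℕ → Prop) → Prop) : TreeAutomaton where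
  State := Prop
  step V E _ := b V E

theorem recognizes_ofLocal {b : (ℕ → Prop) → (ℕ → Prop) → Prop} {φ : Form}
    (hb : ∀ (M : Model) (e : ℕ → Set M.W) (w : M.W),
      w ∈ M.interp φ e ↔ b (M.val w) fun x => w ∈ e x) :
    (ofLocal b).Recognizes {t | t} φ :=
  fun M e _ hr w hw => (hb M e w).trans (Iff.of_eq (hr w hw).symm)

/-- The product automaton, running `A` and `B` in parallel. -/
def prod (A B : TreeAutomaton) : TreeAutomaton where
  State := A.State × B.State
  step V E P := (A.step V E (Prod.fst '' P), B.step V E (Prod.snd '' P))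

section Connectives

variable {A B : TreeAutomaton} {F : Set A.State} {G : Set B.State} {φ ψ : Form}

theorem Recognizes.prod_left (hA : A.Recognizes F φ) (B : TreeAutomaton) :
    (A.prod B).Recognizes (Prod.fst ⁻¹' F) φ :=
  hA.comap fun _ _ _ => rfl

theorem Recognizes.prod_right (hB : B.Recognizes G φ) (A : TreeAutomaton) :
    (A.prod B).Recognizes (Prod.snd ⁻¹' G) φ :=
  hB.comap fun _ _ _ => rfl

theorem Recognizes.or (hA : A.Recognizes F φ) (hB : B.Recognizes G ψ) :
    (A.prod B).Recognizes (Prod.fst ⁻¹' F ∪ Prod.snd ⁻¹' G) (.or φ ψ) :=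
  fun M e r hr w hw => or_congr (hA.prod_left B M e r hr w hw) (hB.prod_right A M e r hr w hw)

theorem Recognizes.and (hA : A.Recognizes F φ) (hB : B.Recognizes G ψ) :
    (A.prod B).Recognizes (Prod.fst ⁻¹' F ∩ Prod.snd ⁻¹' G) (.and φ ψ) :=
  fun M e r hr w hw => and_congr (hA.prod_left B M e r hr w hw) (hB.prod_right A M e r hr w hw)

end Connectives

/-- `A` extended by a bit that records the truth of `b` for the set of states which `A` reaches at
the successors; used for `◇` and `□`. -/
def modal (A : TreeAutomaton) (b : Set A.State → Prop) : TreeAutomaton where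
  State := A.State × Prop
  step V E P := (A.step V E (Prod.fst '' P), b (Prod.fst '' P))

section Modal

variable {A : TreeAutomaton} {F : Set A.State} {φ : Form}

theorem Recognizes.modal (hA : A.Recognizes F φ) (b : Set A.State → Prop) :
    (A.modal b).Recognizes (Prod.fst ⁻¹' F) φ :=
  hA.comap fun _ _ _ => rfl

theorem IsRun.snd_modal_iff {b : Set A.State → Prop} {M : Model} {e : ℕ → Set M.W}
    {r : M.W → A.State × Prop} (hr : (A.modal b).IsRun M e r) {w : M.W} (hw : M.WFAt w) :
    (r w).2 ↔ b ((fun v => (r v).1) '' {v | M.R w v}) := by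
  rw [hr w hw, ← Set.image_image Prod.fst r]
  exact Iff.rfl

theorem Recognizes.dia (hA : A.Recognizes F φ) :
    (A.modal fun P => ∃ q ∈ P, q ∈ F).Recognizes {t : A.State × Prop | t.2} (.dia φ) := by
  intro M e r hr w hw
  calc w ∈ M.interp (.dia φ) e ↔ ∃ v, M.R w v ∧ (r v).1 ∈ F :=
        exists_congr fun v => and_congr_right fun hwv => hA.modal _ M e r hr v (hw.succ hwv)
    _ ↔ (r w).2 := by rw [hr.snd_modal_iff hw, Set.exists_mem_image]; rfl

theorem Recognizes.box (hA : A.Recognizes F φ) :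
    (A.modal fun P => ∀ q ∈ P, q ∈ F).Recognizes {t : A.State × Prop | t.2} (.box φ) := by
  intro M e r hr w hw
  calc w ∈ M.interp (.box φ) e ↔ ∀ v, M.R w v → (r v).1 ∈ F :=
        forall_congr' fun v => imp_congr_right fun hwv => hA.modal _ M e r hr v (hw.succ hwv)
    _ ↔ (r w).2 := by rw [hr.snd_modal_iff hw, Set.forall_mem_image]; rfl

end Modal

/-! ### Fixpoints -/

/-- The automaton for `μx.φ` (with `c = False`) and `νx.φ` (with `c = True`), where `A` with
accepting states `F` recognizes `φ`. Its bit is the fixpoint's truth value at the current point,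
obtained by a single iteration from `c`; the first component is the state of `A` once that bit is
used as the truth value of `x`. -/
def fix (A : TreeAutomaton) (F : Set A.State) (x : ℕ) (c : Prop) : TreeAutomaton where
  State := A.State × Prop
  step V E P :=
    let bit : Prop := A.step V (Function.update E x c) (Prod.fst '' P) ∈ F
    (A.step V (Function.update E x bit) (Prod.fst '' P), bit)

section Fix

variable {A : TreeAutomaton} {F : Set A.State} {φ : Form} {x : ℕ} {c : Prop} {M : Model}
  {e : ℕ → Set M.W} {r : M.W → A.State × Prop}

theorem IsRun.snd_fix (hr : (A.fix F x c).IsRun M e r) {w : M.W} (hw : M.WFAt w) :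
    (r w).2 = (A.step (M.val w) (Function.update (fun y => w ∈ e y) x c)
      ((fun v => (r v).1) '' {v | M.R w v}) ∈ F) := by
  rw [hr w hw, ← Set.image_image Prod.fst r]
  rfl

theorem IsRun.fst_fix (hr : (A.fix F x c).IsRun M e r) {w : M.W} (hw : M.WFAt w) :
    (r w).1 = A.step (M.val w) (Function.update (fun y => w ∈ e y) x (r w).2)
      ((fun v => (r v).1) '' {v | M.R w v}) := by
  rw [hr.snd_fix hw, hr w hw, ← Set.image_image Prod.fst r]
  rfl

theorem isRun_update_iff {r : M.W → A.State} {S : Set M.W} :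
    A.IsRun M (Function.update e x S) r ↔ ∀ w, M.WFAt w →
      r w = A.step (M.val w) (Function.update (fun y => w ∈ e y) x (w ∈ S))
        (r '' {v | M.R w v}) := by
  have mem_update (w : M.W) : (fun y => w ∈ Function.update e x S y) =
      Function.update (fun y => w ∈ e y) x (w ∈ S) := Function.comp_update (w ∈ ·) e x S
  simp only [IsRun, mem_update]

theorem Recognizes.mem_interp_update_iff (hA : A.Recognizes F φ)
    (hr : (A.fix F x c).IsRun M e r) {S : Set M.W} (hS : ∀ w, M.WFAt w → (w ∈ S ↔ (r w).2))
    {w : M.W} (hw : M.WFAt w) (hc : (r w).2 ↔ c) :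
    w ∈ M.interp φ (Function.update e x S) ↔ (r w).2 := by
  have hrun : A.IsRun M (Function.update e x S) fun w => (r w).1 :=
    isRun_update_iff.2 fun w hw => by rw [propext (hS w hw), ← hr.fst_fix hw]
  rw [hA M _ _ hrun w hw, hr.fst_fix hw, propext hc, ← hr.snd_fix hw, propext hc]

-- Where `L` agrees with `c`, it agrees with the bit too: the bit is one iteration from `c`, and one
-- iteration from `L` gives back `L`.
theorem Recognizes.mem_fixpoint_iff (hA : A.Recognizes F φ) (hr : (A.fix F x c).IsRun M e r)
    {L : Set M.W} (hfix : M.interp φ (Function.update e x L) = L)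
    (hL : ∀ w, M.WFAt w → (w ∈ L ↔ c) ∨ (w ∈ L ↔ (r w).2)) {w : M.W} (hw : M.WFAt w) :
    w ∈ L ↔ (r w).2 := by
  obtain ⟨s, hs⟩ := A.exists_isRun M (Function.update e x L)
  have hs_step := isRun_update_iff.1 hs
  suffices s w = (r w).1 ∧ (w ∈ L ↔ (r w).2) from this.2
  refine hw.induction fun w hw ih => ?_
  have himage : s '' {v | M.R w v} = (fun v => (r v).1) '' {v | M.R w v} :=
    Set.image_congr fun v hwv => (ih v hwv).1
  have hmem : w ∈ L ↔ (r w).2 := by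
    refine (hL w hw).elim (fun hc => ?_) id
    calc w ∈ L ↔ w ∈ M.interp φ (Function.update e x L) := by rw [hfix]
      _ ↔ s w ∈ F := hA M _ s hs w hw
      _ ↔ (r w).2 := by rw [hs_step w hw, himage, propext hc, ← hr.snd_fix hw]
  exact ⟨by rw [hs_step w hw, himage, propext hmem, ← hr.fst_fix hw], hmem⟩

end Fix

section Fixpoints

variable {A : TreeAutomaton} {F : Set A.State} {φ : Form}

theorem Recognizes.mu (hA : A.Recognizes F φ) (x : ℕ) :
    (A.fix F x False).Recognizes {t : A.State × Prop | t.2} (.mu x φ) := by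
  intro M e r hr w hw
  have hle : M.interp (.mu x φ) e ⊆ {v | M.WFAt v → (r v).2} := by
    refine sInf_le fun v hv hwf => by_contra fun hbit => hbit ?_
    exact (hA.mem_interp_update_iff hr (fun u hu => forall_prop_of_true hu) hwf
      (iff_false_intro hbit)).1 hv
  refine hA.mem_fixpoint_iff hr (M.interp_update_interp_mu φ x e) (fun v hv => ?_) hw
  by_cases hmem : v ∈ M.interp (.mu x φ) e
  · exact Or.inr (iff_of_true hmem (hle hmem hv))
  · exact Or.inl (iff_false_intro hmem)

theorem Recognizes.nu (hA : A.Recognizes F φ) (x : ℕ) :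
    (A.fix F x True).Recognizes {t : A.State × Prop | t.2} (.nu x φ) := by
  intro M e r hr w hw
  have hle : {v | M.WFAt v ∧ (r v).2} ⊆ M.interp (.nu x φ) e := by
    refine le_sSup fun v ⟨hwf, hbit⟩ => ?_
    exact (hA.mem_interp_update_iff hr (fun u hu => and_iff_right hu) hwf
      (iff_true_intro hbit)).2 hbit
  refine hA.mem_fixpoint_iff hr (M.interp_update_interp_nu φ x e) (fun v hv => ?_) hw
  by_cases hmem : v ∈ M.interp (.nu x φ) e
  · exact Or.inl (iff_true_intro hmem)
  · exact Or.inr (iff_of_false hmem fun hbit => hmem (hle ⟨hv, hbit⟩))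

end Fixpoints

theorem exists_recognizes (φ : Form) :
    ∃ (A : TreeAutomaton) (F : Set A.State), A.Recognizes F φ := by
  induction φ with
  | pos p => exact ⟨_, _, recognizes_ofLocal (b := fun V _ => V p) fun _ _ _ => Iff.rfl⟩
  | neg p => exact ⟨_, _, recognizes_ofLocal (b := fun V _ => ¬ V p) fun _ _ _ => Iff.rfl⟩
  | var x => exact ⟨_, _, recognizes_ofLocal (b := fun _ E => E x) fun _ _ _ => Iff.rfl⟩
  | or φ ψ ihφ ihψ =>
    obtain ⟨A, F, hA⟩ := ihφ
    obtain ⟨B, G, hB⟩ := ihψ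
    exact ⟨_, _, hA.or hB⟩
  | and φ ψ ihφ ihψ =>
    obtain ⟨A, F, hA⟩ := ihφ
    obtain ⟨B, G, hB⟩ := ihψ
    exact ⟨_, _, hA.and hB⟩
  | dia φ ih =>
    obtain ⟨A, F, hA⟩ := ih
    exact ⟨_, _, hA.dia⟩
  | box φ ih =>
    obtain ⟨A, F, hA⟩ := ih
    exact ⟨_, _, hA.box⟩
  | mu x φ ih =>
    obtain ⟨A, F, hA⟩ := ih
    exact ⟨_, _, hA.mu x⟩
  | nu x φ ih =>
    obtain ⟨A, F, hA⟩ := ih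
    exact ⟨_, _, hA.nu x⟩

theorem exists_forall_mem_recognizes {Φ : Set Form} (hΦ : Φ.Finite) :
    ∃ A : TreeAutomaton, ∀ φ ∈ Φ, ∃ F : Set A.State, A.Recognizes F φ := by
  induction Φ, hΦ using Set.Finite.induction_on with
  | empty => exact ⟨ofLocal fun _ _ => True, fun _ hφ => hφ.elim⟩
  | @insert φ Φ _ _ ih =>
    obtain ⟨A, hA⟩ := ih
    obtain ⟨B, G, hB⟩ := exists_recognizes φ
    refine ⟨A.prod B, Set.forall_mem_insert.2 ⟨⟨_, hB.prod_right A⟩, fun χ hχ => ?_⟩⟩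
    obtain ⟨F, hF⟩ := hA χ hχ
    exact ⟨_, hF.prod_left B⟩

/-! ### Realizing states in finite trees -/

theorem IsRun.graft {A : TreeAutomaton} {ι : Type} {N : ι → Model}
    {r : ∀ i, (N i).W → A.State} (hr : ∀ i, A.IsRun (N i) (fun _ => ∅) (r i)) (V : ℕ → Prop) :
    A.IsRun (Model.graft N V) (fun _ => ∅) fun a =>
      a.elim (A.step V (fun _ => False) (Set.range fun i => r i (N i).root))
        fun p => r p.1 p.2 := by
  rintro (_ | ⟨i, u⟩) hwf
  · simp only [Model.graft, Model.setOf_graftR_none, ← Set.range_comp]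
    rfl
  · simp only [Model.graft, Model.setOf_graftR_some, Set.image_image]
    exact hr i u hwf.of_graft

theorem IsRun.exists_finite_tree {A : TreeAutomaton} {M : Model} {r : M.W → A.State}
    (hr : A.IsRun M (fun _ => ∅) r) {w : M.W} (hw : M.WFAt w) :
    ∃ N : Model, N.IsTree ∧ Finite N.W ∧
      ∃ s : N.W → A.State, A.IsRun N (fun _ => ∅) s ∧ s N.root = r w := by
  refine hw.induction fun w hw ih => ?_
  have hsucc (q : r '' {v | M.R w v}) : ∃ N : Model, N.IsTree ∧ Finite N.W ∧
      ∃ s : N.W → A.State, A.IsRun N (fun _ => ∅) s ∧ s N.root = q := by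
    obtain ⟨_, v, hwv, rfl⟩ := q
    exact ih v hwv
  choose N htree hfin s hs hroot using hsucc
  refine ⟨Model.graft N (M.val w), Model.isTree_graft htree _,
    inferInstanceAs (Finite (Option (Σ q, (N q).W))), _, IsRun.graft hs _, ?_⟩
  calc A.step (M.val w) (fun _ => False) (Set.range fun q => s q (N q).root)
      = A.step (M.val w) (fun _ => False) (r '' {v | M.R w v}) := by
        simp only [hroot, Subtype.range_coe]
    _ = r w := (hr w hw).symm

end TreeAutomaton

theorem Model.WFAt.exists_finite_tree_sat_iff {M : Model} (hM : M.WFAt M.root) {Φ : Set Form}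
    (hΦ : Φ.Finite) :
    ∃ N : Model, (N.IsTree ∧ Finite N.W) ∧ ∀ φ ∈ Φ, (N.Sat φ ↔ M.Sat φ) := by
  obtain ⟨A, hA⟩ := TreeAutomaton.exists_forall_mem_recognizes hΦ
  obtain ⟨r, hr⟩ := A.exists_isRun M fun _ => ∅
  obtain ⟨N, hN, hfin, s, hs, hroot⟩ := hr.exists_finite_tree hM
  refine ⟨N, ⟨hN, hfin⟩, fun φ hφ => ?_⟩
  obtain ⟨F, hF⟩ := hA φ hφ
  calc N.Sat φ ↔ s N.root ∈ F := hF N _ s hs _ (hN.wfAt_of_finite _)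
    _ ↔ r M.root ∈ F := by rw [hroot]
    _ ↔ M.Sat φ := (hF M _ r hr _ hM).symm

section Separates

variable {C D : Set Model} {φ φ' ψ : Form}

theorem separates_and_negThetaInf_iff :
    Separates D ψ (.and φ negThetaInf) (.and φ' negThetaInf) ↔
      Separates {M ∈ D | M.WFAt M.root} ψ φ φ' := by
  simp only [Separates, Model.sat_and_negThetaInf_iff, Set.mem_ofPred_eq]
  grind

theorem Separates.anti (hCD : C ⊆ D) (h : Separates D ψ φ φ') : Separates C ψ φ φ' :=
  ⟨fun M hM => h.1 M (hCD hM), fun M hM => h.2 M (hCD hM)⟩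

theorem Separates.of_forall_exists_sat_iff (h : Separates C ψ φ φ')
    (hDC : ∀ M ∈ D, ∃ N ∈ C, ∀ χ ∈ ({φ, φ', ψ} : Set Form), (N.Sat χ ↔ M.Sat χ)) :
    Separates D ψ φ φ' := by
  simp only [Set.forall_mem_insert, Set.mem_singleton_iff, forall_eq] at hDC
  constructor
  all_goals
    intro M hM
    obtain ⟨N, hN, hφ, hφ', hψ⟩ := hDC M hM
  · rw [← hφ, ← hψ]
    exact h.1 N hN
  · rw [← hφ', ← hψ]
    exact h.2 N hN

end Separates

theorem setOf_mem_treeC_and_finite (d : ℕ) :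
    {M : Model | M ∈ TreeC d ∧ Finite M.W} = {M ∈ TreeC d | M.WFAt M.root} :=
  Set.ext fun _ => and_congr_right fun hM => hM.1.finite_iff_wfAt_root hM.2.finite_succ

theorem stmt_18_general (φ φ' ψ : Form) :
    (Separates {M : Model | M.IsTree ∧ Finite M.W} ψ φ φ' ↔
      Separates Set.univ ψ (Form.and φ negThetaInf) (Form.and φ' negThetaInf)) ∧
    (∀ d : ℕ, Separates {M : Model | M ∈ TreeC d ∧ Finite M.W} ψ φ φ' ↔
      Separates (TreeC d) ψ (Form.and φ negThetaInf) (Form.and φ' negThetaInf)) := by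
  simp only [separates_and_negThetaInf_iff, setOf_mem_treeC_and_finite, implies_true, and_true]
  constructor
  · intro h
    exact h.of_forall_exists_sat_iff fun M hM =>
      hM.2.exists_finite_tree_sat_iff (Set.toFinite {φ, φ', ψ})
  · exact Separates.anti fun M ⟨htree, _⟩ => ⟨Set.mem_univ M, htree.wfAt_of_finite M.root⟩

/-- `ψ` separates `φ, φ'` over finite trees iff it separates
`φ ∧ ¬θ_∞, φ' ∧ ¬θ_∞` over all models; and the same relativized to `T^d`. -/
theorem stmt_18 (φ φ' ψ : Form) (hψ : ψ.IsML) :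
    (Separates {M : Model | M.IsTree ∧ Finite M.W} ψ φ φ' ↔
      Separates Set.univ ψ (Form.and φ negThetaInf) (Form.and φ' negThetaInf)) ∧
    (∀ d : ℕ, Separates {M : Model | M ∈ TreeC d ∧ Finite M.W} ψ φ φ' ↔
      Separates (TreeC d) ψ (Form.and φ negThetaInf) (Form.and φ' negThetaInf)) :=
  stmt_18_general φ φ' ψ
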